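/- Let q ≥ 2 and let M be a random s×t matrix whose entries are independent, each equal to 0 or 1 with probability 1/2. Then for every vector v ∈ Z_q^s, |P[M·1_t ≡ v (mod q)] − q^{−s}| ≤ q^{−s}·[(1 + (q−1)·e^{−2t/q²})^s − 1]. -/

import Mathlib

open Finset

open scoped Classical

/-!
The rows of `M` are independent, so the probability is a product of `s` one-row probabilities.
For one row, expanding the indicator of `∑ x_j = a` in the additive characters of `ZMod q` gives
`q · #{x | ∑ x_j = a} = ∑_k ψ(-ka) (1 + ψ(k))^t`. The term `k = 0` is the main term `2 ^ t`. For
`k ≠ 0`, `|1 + ψ(k)| = 2 |cos (πk/q)|`, and Jordan's inequality `sin (πk/q) ≥ 2/q` gives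
`cos² (πk/q) ≤ 1 - 4/q² ≤ exp (-4/q²)` (`norm_one_add_stdAddChar_le`). Hence every one-row
probability is `(1 + δ) / q` with `|δ| ≤ (q - 1) exp (-2t/q²)` (`row_count_bound`), and
`|∏ (1 + δ_i) - 1| ≤ (1 + D) ^ s - 1` whenever all `|δ_i| ≤ D` (`abs_prod_sub_one_le`).
-/

/-- Jordan's inequality, applied to whichever of `πk/q` and `π(q-k)/q` is at most `π/2`. -/
lemma two_div_le_sin (q k : ℕ) (hk : 0 < k) (hkq : k < q) :
    2 / (q : ℝ) ≤ Real.sin (Real.pi * k / q) := by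
  have hq : (0 : ℝ) < q := by exact_mod_cast hk.trans hkq
  have key : ∀ m : ℕ, 0 < m → 2 * m ≤ q → 2 / (q : ℝ) ≤ Real.sin (Real.pi * m / q) := by
    intro m hm hmq
    have hm' : (1 : ℝ) ≤ m := by exact_mod_cast hm
    have hmq' : (2 : ℝ) * m ≤ q := by exact_mod_cast hmq
    have h := Real.mul_le_sin (x := Real.pi * m / q) (by positivity) (by
      rw [div_le_div_iff₀ hq two_pos]
      nlinarith [Real.pi_pos])
    refine le_trans ?_ h
    have : 2 / Real.pi * (Real.pi * m / q) = 2 * m / q := by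
      field_simp
    rw [this]
    gcongr
    linarith
  rcases le_total (2 * k) q with h | h
  · exact key k hk h
  · have h1 := key (q - k) (by omega) (by omega)
    rw [Nat.cast_sub hkq.le] at h1
    have : Real.pi * ((q : ℝ) - k) / q = Real.pi - Real.pi * k / q := by
      field_simp
    rwa [this, Real.sin_pi_sub] at h1

lemma norm_one_add_stdAddChar_le (q : ℕ) [NeZero q] (k : ZMod q) (hk : k ≠ 0) :
    ‖1 + ZMod.stdAddChar k‖ ≤ 2 * Real.exp (-2 / (q : ℝ) ^ 2) := by
  have hs := two_div_le_sin q k.val (Nat.pos_of_ne_zero (by simpa using hk)) (ZMod.val_lt k)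
  have hq : (0 : ℝ) < q := by exact_mod_cast NeZero.pos q
  set θ := Real.pi * k.val / q with hθ
  have hψ : ZMod.stdAddChar k = Complex.exp ((2 * θ : ℝ) * Complex.I) := by
    rw [ZMod.stdAddChar_apply, ZMod.toCircle_apply]
    congr 1
    rw [hθ]
    push_cast
    ring
  have hsq : ‖1 + ZMod.stdAddChar k‖ ^ 2 = 4 * (1 - Real.sin θ ^ 2) := by
    rw [hψ, Complex.sq_norm, Complex.normSq_apply]
    simp only [Complex.add_re, Complex.add_im, Complex.one_re, Complex.one_im,
      Complex.exp_ofReal_mul_I_re, Complex.exp_ofReal_mul_I_im]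
    rw [Real.cos_two_mul, Real.sin_two_mul]
    nlinarith [Real.sin_sq_add_cos_sq θ]
  refine le_of_sq_le_sq ?_ (by positivity)
  rw [hsq, mul_pow, ← Real.exp_nat_mul]
  have h1 : (2 / (q : ℝ)) ^ 2 ≤ Real.sin θ ^ 2 := by gcongr
  have h2 := Real.add_one_le_exp (-(2 / (q : ℝ)) ^ 2)
  have h3 : ((2 : ℕ) : ℝ) * (-2 / (q : ℝ) ^ 2) = -(2 / (q : ℝ)) ^ 2 := by
    push_cast
    ring
  rw [h3]
  linarith

/-- Character expansion of the number of `0/1` vectors with prescribed coordinate sum. -/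
lemma row_count_fourier (q t : ℕ) [NeZero q] (a : ZMod q) :
    (q : ℂ) * ((univ.filter fun x : Fin t → Fin 2 => ∑ j, ((x j : ℕ) : ZMod q) = a).card : ℂ)
      = ∑ k : ZMod q, ZMod.stdAddChar (-(k * a)) * (1 + ZMod.stdAddChar k) ^ t := by
  have h1 : ∀ k : ZMod q, (1 + ZMod.stdAddChar k : ℂ) ^ t
      = ∑ x : Fin t → Fin 2, ZMod.stdAddChar (k * ∑ j, ((x j : ℕ) : ZMod q)) := by
    intro k
    have : (1 + ZMod.stdAddChar k : ℂ)
        = ∑ b : Fin 2, ZMod.stdAddChar (k * ((b : ℕ) : ZMod q)) := by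
      simp [Fin.sum_univ_two]
    rw [this, Fintype.sum_pow]
    refine sum_congr rfl fun x _ => ?_
    rw [mul_sum]
    exact (map_prod (ZMod.stdAddChar (N := q)).toMonoidHom
      (fun j => Multiplicative.ofAdd (k * ((x j : ℕ) : ZMod q))) univ).symm
  have h2 : ∀ x : Fin t → Fin 2,
      (∑ k : ZMod q, ZMod.stdAddChar (-(k * a)) *
        ZMod.stdAddChar (k * ∑ j, ((x j : ℕ) : ZMod q)) : ℂ)
      = if ∑ j, ((x j : ℕ) : ZMod q) = a then (q : ℂ) else 0 := by
    intro x
    have := AddChar.sum_mulShift (∑ j, ((x j : ℕ) : ZMod q) - a)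
      (ZMod.isPrimitive_stdAddChar q)
    simp only [sub_eq_zero, ZMod.card] at this
    rw [Nat.cast_ite, Nat.cast_zero] at this
    rw [← this]
    refine sum_congr rfl fun k _ => ?_
    rw [← AddChar.map_add_eq_mul]
    congr 1
    ring
  rw [sum_congr rfl fun k _ => by rw [h1 k, mul_sum], sum_comm]
  rw [sum_congr rfl fun x _ => h2 x, ← sum_filter, sum_const, nsmul_eq_mul, mul_comm]

lemma row_count_bound (q t : ℕ) (hq : 2 ≤ q) (a : ZMod q) :
    |(q : ℝ) * (((univ.filter fun x : Fin t → Fin 2 =>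
        ∑ j, ((x j : ℕ) : ZMod q) = a).card : ℝ) / 2 ^ t) - 1|
      ≤ ((q : ℝ) - 1) * Real.exp (-2 * t / (q : ℝ) ^ 2) := by
  have : NeZero q := ⟨by omega⟩
  have hF := row_count_fourier q t a
  set N := (univ.filter fun x : Fin t → Fin 2 => ∑ j, ((x j : ℕ) : ZMod q) = a).card
  rw [← add_sum_erase _ _ (mem_univ (0 : ZMod q))] at hF
  have hb : |(q : ℝ) * N - 2 ^ t|
      ≤ ((q : ℝ) - 1) * (2 * Real.exp (-2 / (q : ℝ) ^ 2)) ^ t := by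
    have e : (((q : ℝ) * N - 2 ^ t : ℝ) : ℂ) = ∑ k ∈ univ.erase (0 : ZMod q),
        ZMod.stdAddChar (-(k * a)) * (1 + ZMod.stdAddChar k) ^ t := by
      push_cast
      rw [hF]
      simp only [zero_mul, neg_zero, AddChar.map_zero_eq_one]
      norm_num
    rw [← Real.norm_eq_abs, ← Complex.norm_real, e]
    have hc : ((univ.erase (0 : ZMod q)).card : ℝ) = (q : ℝ) - 1 := by
      rw [card_erase_of_mem (mem_univ _), card_univ, ZMod.card, Nat.cast_sub (by omega)]
      simp
    rw [← hc, ← nsmul_eq_mul]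
    refine norm_sum_le_of_le _ (fun k hk => ?_) |>.trans (by rw [sum_const])
    rw [norm_mul, norm_pow, AddChar.norm_apply, one_mul]
    gcongr
    exact norm_one_add_stdAddChar_le q k (ne_of_mem_erase hk)
  have h2 : (0 : ℝ) < 2 ^ t := by positivity
  have e1 : (q : ℝ) * (N / 2 ^ t) - 1 = (q * N - 2 ^ t) / 2 ^ t := by
    field_simp
  rw [e1, abs_div, abs_of_pos h2, div_le_iff₀ h2]
  refine hb.trans_eq ?_
  rw [mul_pow, ← Real.exp_nat_mul]
  have : (t : ℝ) * (-2 / (q : ℝ) ^ 2) = -2 * t / (q : ℝ) ^ 2 := by ring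
  rw [this]
  ring

lemma abs_prod_sub_one_le (D : ℝ) (s : ℕ) (f : Fin s → ℝ) (hf : ∀ i, |f i - 1| ≤ D) :
    |∏ i, f i - 1| ≤ (1 + D) ^ s - 1 := by
  induction s with
  | zero => simp
  | succ n ih =>
    have hD : 0 ≤ D := (abs_nonneg _).trans (hf 0)
    have h := ih (fun i => f i.succ) fun i => hf i.succ
    rw [Fin.prod_univ_succ]
    set P := ∏ i : Fin n, f i.succ
    have h0 : |f 0| ≤ 1 + D := by
      have := abs_add_le (f 0 - 1) 1
      simp only [sub_add_cancel, abs_one] at this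
      linarith [hf 0]
    calc |f 0 * P - 1| = |f 0 * (P - 1) + (f 0 - 1)| := by ring_nf
      _ ≤ |f 0| * |P - 1| + |f 0 - 1| := by
        rw [← abs_mul]
        exact abs_add_le _ _
      _ ≤ (1 + D) * ((1 + D) ^ n - 1) + D := by
        gcongr
        exact hf 0
      _ = (1 + D) ^ (n + 1) - 1 := by ring

/-- Let `q ≥ 2` and let `M` be a uniformly random `s × t` matrix
with entries in `{0,1}`.  For every `v ∈ Z_q^s`,
`|P[M·1_t ≡ v (mod q)] − q^{−s}| ≤ q^{−s}·[(1 + (q−1) e^{−2t/q²})^s − 1]`. -/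
theorem random_matrix_row_sums_mod_q (q s t : ℕ) (hq : 2 ≤ q)
    (v : Fin s → ZMod q) :
    |((Finset.univ.filter fun M : Fin s → Fin t → Fin 2 =>
          ∀ i, (∑ j, ((M i j : ℕ) : ZMod q)) = v i).card : ℝ) / 2 ^ (s * t)
        - ((q : ℝ) ^ s)⁻¹|
      ≤ ((q : ℝ) ^ s)⁻¹ *
        ((1 + ((q : ℝ) - 1) * Real.exp (-2 * t / (q : ℝ) ^ 2)) ^ s - 1) := by
  have hq0 : (0 : ℝ) < q := by
    have : 0 < q := by omega
    exact_mod_cast this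
  have hset : (Finset.univ.filter fun M : Fin s → Fin t → Fin 2 =>
      ∀ i, (∑ j, ((M i j : ℕ) : ZMod q)) = v i)
      = Fintype.piFinset fun i => univ.filter fun x : Fin t → Fin 2 =>
          ∑ j, ((x j : ℕ) : ZMod q) = v i := by
    ext M
    simp [Fintype.mem_piFinset]
  have h := abs_prod_sub_one_le _ s _ fun i => row_count_bound q t hq (v i)
  rw [hset, Fintype.card_piFinset]
  rw [prod_mul_distrib, prod_div_distrib, prod_const, prod_const, card_univ, Fintype.card_fin,
    ← pow_mul, mul_comm t s] at h
  push_cast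
  set X : ℝ := (∏ i, ((univ.filter fun x : Fin t → Fin 2 =>
    ∑ j, ((x j : ℕ) : ZMod q) = v i).card : ℝ)) / 2 ^ (s * t)
  have hqs : (0 : ℝ) < (q : ℝ) ^ s := by positivity
  have e : X - ((q : ℝ) ^ s)⁻¹ = ((q : ℝ) ^ s)⁻¹ * ((q : ℝ) ^ s * X - 1) := by
    field_simp
  rw [e, abs_mul, abs_of_pos (inv_pos.2 hqs)]
  gcongr
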